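/- For all integers L₀ ≥ 1 and every ε > 0, there is n₀ = n₀(ε, L₀) such that for every d ∈ [0,1) and every 3-uniform hypergraph G = (V, E) on n ≥ n₀ vertices, there exists a partition of V into V₀, V₁, …, V_L and a spanning subhypergraph G' of G such that: (i) L₀ ≤ L ≤ n₀ and |V₀| ≤ εn; (ii) |V₁| = … = |V_L| =: m; (iii) d_{G'}(v) > d_G(v) − (d + ε)n² for all v ∈ V; (iv) every edge of G' with more than one vertex in a single cluster V_i for some i ∈ [L] has at least one vertex in V₀; (v) for every triple {h, i, j} of distinct indices in [L], the 3-partite subhypergraph (V_h, V_i, V_j)_{G'} consisting of the edges of G' with one vertex in each of V_h, V_i, V_j is either empty or weakly (ε,d)-regular. -/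

import Mathlib

open Finset
open scoped Classical

/-- Number of ordered pairs `(x,y) ∈ A × B` with `{x,y}` an edge of `G`. -/
noncomputable def pairCount {V : Type*} (G : SimpleGraph V) (A B : Finset V) : ℕ :=
  ((A ×ˢ B).filter (fun p => G.Adj p.1 p.2)).card

/-- Number of neighbours of `v` in `B`. -/
noncomputable def degIn {V : Type*} (G : SimpleGraph V) (v : V) (B : Finset V) : ℕ :=
  (B.filter (fun w => G.Adj v w)).card

/-- Degree of `v` in `G`. -/
noncomputable def degOf {V : Type*} [Fintype V] (G : SimpleGraph V) (v : V) : ℕ :=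
  ((univ : Finset V).filter (fun w => G.Adj v w)).card

/-- Number of edges of `G`. -/
noncomputable def edgeCnt {V : Type*} [Fintype V] (G : SimpleGraph V) : ℕ :=
  ((univ : Finset (Sym2 V)).filter (fun e => e ∈ G.edgeSet)).card

/-- Number of edges of `H` with one endpoint in `A` and the other in `B`. -/
noncomputable def eBetween {W : Type*} [Fintype W] (H : SimpleGraph W) (A B : Finset W) : ℕ :=
  ((univ : Finset (Sym2 W)).filter
    (fun e => e ∈ H.edgeSet ∧ ∃ x ∈ A, ∃ y ∈ B, e = s(x, y))).card

/-- A graph `H` on `h` vertices is `μ`-separable if there is `X ⊆ V(H)` with `|X| ≤ μ h`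
such that every connected component of `H - X` has at most `μ h` vertices. -/
def Separable {W : Type*} [Fintype W] (H : SimpleGraph W) (μ : ℝ) : Prop :=
  ∃ X : Finset W, (X.card : ℝ) ≤ μ * (Fintype.card W : ℝ) ∧
    ∀ K : (SimpleGraph.induce ((↑X : Set W)ᶜ) H).ConnectedComponent,
      (K.supp.ncard : ℝ) ≤ μ * (Fintype.card W : ℝ)

/-- A transversal copy of `H` in the graph collection `G`. -/
def HasTransversal {V C W : Type*} (G : C → SimpleGraph V) (H : SimpleGraph W) : Prop :=
  ∃ (τ : W → V) (σ : Sym2 W → C),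
    Function.Injective τ ∧ Set.InjOn σ H.edgeSet ∧
    ∀ x y, H.Adj x y → (G (σ s(x, y))).Adj (τ x) (τ y)

/-- Density of a collection of bipartite graphs. -/
noncomputable def colDensity {V C : Type*} (G : C → SimpleGraph V)
    (A B : Finset V) (D : Finset C) : ℝ :=
  (∑ c ∈ D, (pairCount (G c) A B : ℝ)) / ((D.card : ℝ) * (A.card : ℝ) * (B.card : ℝ))

/-- `(ε,d)`-regularity of a collection of bipartite graphs with parts `V₁, V₂`
and colour set `D`. -/
def ColReg {V C : Type*} (ε d : ℝ) (G : C → SimpleGraph V)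
    (V₁ V₂ : Finset V) (D : Finset C) : Prop :=
  d ≤ colDensity G V₁ V₂ D ∧
  ∀ V₁' ⊆ V₁, ∀ V₂' ⊆ V₂, ∀ D' ⊆ D,
    ε * (V₁.card : ℝ) ≤ (V₁'.card : ℝ) → ε * (V₂.card : ℝ) ≤ (V₂'.card : ℝ) →
    ε * (D.card : ℝ) ≤ (D'.card : ℝ) →
    |colDensity G V₁' V₂' D' - colDensity G V₁ V₂ D| < ε

/-- `(ε,d)`-superregularity of a collection of bipartite graphs. -/
def ColSuperReg {V C : Type*} (ε d : ℝ) (G : C → SimpleGraph V)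
    (V₁ V₂ : Finset V) (D : Finset C) : Prop :=
  ColReg ε d G V₁ V₂ D ∧
  (∀ v ∈ V₁, d * (V₂.card : ℝ) * (D.card : ℝ) ≤ ∑ c ∈ D, (degIn (G c) v V₂ : ℝ)) ∧
  (∀ v ∈ V₂, d * (V₁.card : ℝ) * (D.card : ℝ) ≤ ∑ c ∈ D, (degIn (G c) v V₁ : ℝ)) ∧
  (∀ c ∈ D, d * (V₁.card : ℝ) * (V₂.card : ℝ) ≤ (pairCount (G c) V₁ V₂ : ℝ))

/-- `(ε,d)`-half-superregularity of a collection of bipartite graphs. -/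
def ColHalfSuperReg {V C : Type*} (ε d : ℝ) (G : C → SimpleGraph V)
    (V₁ V₂ : Finset V) (D : Finset C) : Prop :=
  (∀ V₁' ⊆ V₁, ∀ V₂' ⊆ V₂, ∀ D' ⊆ D,
    ε * (V₁.card : ℝ) ≤ (V₁'.card : ℝ) → ε * (V₂.card : ℝ) ≤ (V₂'.card : ℝ) →
    ε * (D.card : ℝ) ≤ (D'.card : ℝ) →
    d * (D'.card : ℝ) * (V₁'.card : ℝ) * (V₂'.card : ℝ) ≤
      ∑ c ∈ D', (pairCount (G c) V₁' V₂' : ℝ)) ∧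
  (∀ v ∈ V₁, d * (V₂.card : ℝ) * (D.card : ℝ) ≤ ∑ c ∈ D, (degIn (G c) v V₂ : ℝ)) ∧
  (∀ v ∈ V₂, d * (V₁.card : ℝ) * (D.card : ℝ) ≤ ∑ c ∈ D, (degIn (G c) v V₁ : ℝ)) ∧
  (∀ c ∈ D, d * (V₁.card : ℝ) * (V₂.card : ℝ) ≤ (pairCount (G c) V₁ V₂ : ℝ))

/-- `(ε,d)`-half-superregularity of a bipartite graph (given by an adjacency relation)
with parts `V₁, V₂`. -/
def BipHalfSuper {V : Type*} (ε d : ℝ) (A : V → V → Prop) (V₁ V₂ : Finset V) : Prop :=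
  (∀ U₁ ⊆ V₁, ∀ U₂ ⊆ V₂,
    ε * (V₁.card : ℝ) ≤ (U₁.card : ℝ) → ε * (V₂.card : ℝ) ≤ (U₂.card : ℝ) →
    d * (U₁.card : ℝ) * (U₂.card : ℝ) ≤
      (((U₁ ×ˢ U₂).filter (fun p => A p.1 p.2)).card : ℝ)) ∧
  (∀ x ∈ V₁, d * (V₂.card : ℝ) ≤ ((V₂.filter (fun y => A x y)).card : ℝ)) ∧
  (∀ y ∈ V₂, d * (V₁.card : ℝ) ≤ ((V₁.filter (fun x => A x y)).card : ℝ))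

/-- Number of ordered triples `(x₁,x₂,x₃) ∈ U₁ × U₂ × U₃` with `{x₁,x₂,x₃}` an edge. -/
noncomputable def tripCount {V : Type*} (E : Set (Finset V)) (U₁ U₂ U₃ : Finset V) : ℕ :=
  ((U₁ ×ˢ U₂ ×ˢ U₃).filter
    (fun p => ({p.1, p.2.1, p.2.2} : Finset V) ∈ E)).card

/-- Density of the triple `(U₁,U₂,U₃)` in a `3`-graph. -/
noncomputable def tripDensity {V : Type*} (E : Set (Finset V)) (U₁ U₂ U₃ : Finset V) : ℝ :=
  (tripCount E U₁ U₂ U₃ : ℝ) / ((U₁.card : ℝ) * (U₂.card : ℝ) * (U₃.card : ℝ))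

/-- Degree of a vertex in a hypergraph: the number of edges containing it. -/
noncomputable def hDeg {V : Type*} [Fintype V] (E : Set (Finset V)) (v : V) : ℕ :=
  ((univ : Finset (Finset V)).filter (fun e => e ∈ E ∧ v ∈ e)).card

/-- Weak `(ε,d)`-regularity of a 3-partite triple in a 3-graph. -/
def TripReg {V : Type*} (ε d : ℝ) (E : Set (Finset V)) (V₁ V₂ V₃ : Finset V) : Prop :=
  d ≤ tripDensity E V₁ V₂ V₃ ∧
  ∀ U₁ ⊆ V₁, ∀ U₂ ⊆ V₂, ∀ U₃ ⊆ V₃,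
    ε * (V₁.card : ℝ) ≤ (U₁.card : ℝ) → ε * (V₂.card : ℝ) ≤ (U₂.card : ℝ) →
    ε * (V₃.card : ℝ) ≤ (U₃.card : ℝ) →
    |tripDensity E U₁ U₂ U₃ - tripDensity E V₁ V₂ V₃| < ε

/-- Weak `(ε,d)`-half-superregularity of a 3-partite triple in a 3-graph. -/
def TripHalfSuper {V : Type*} (ε d : ℝ) (E : Set (Finset V)) (V₁ V₂ V₃ : Finset V) : Prop :=
  (∀ U₁ ⊆ V₁, ∀ U₂ ⊆ V₂, ∀ U₃ ⊆ V₃,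
    ε * (V₁.card : ℝ) ≤ (U₁.card : ℝ) → ε * (V₂.card : ℝ) ≤ (U₂.card : ℝ) →
    ε * (V₃.card : ℝ) ≤ (U₃.card : ℝ) →
    d * (U₁.card : ℝ) * (U₂.card : ℝ) * (U₃.card : ℝ) ≤ (tripCount E U₁ U₂ U₃ : ℝ)) ∧
  (∀ x ∈ V₁, d * (V₂.card : ℝ) * (V₃.card : ℝ) ≤ (tripCount E {x} V₂ V₃ : ℝ)) ∧
  (∀ y ∈ V₂, d * (V₁.card : ℝ) * (V₃.card : ℝ) ≤ (tripCount E V₁ {y} V₃ : ℝ)) ∧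
  (∀ z ∈ V₃, d * (V₁.card : ℝ) * (V₂.card : ℝ) ≤ (tripCount E V₁ V₂ {z} : ℝ))

/-- A copy of the 1-expansion of `H` in a 3-graph with edge set `E`. -/
def HasExpansionCopy {V W : Type*} (E : Set (Finset V)) (H : SimpleGraph W) : Prop :=
  ∃ (ρv : W → V) (ρe : Sym2 W → V),
    Function.Injective ρv ∧ Set.InjOn ρe H.edgeSet ∧
    (∀ x, ∀ e ∈ H.edgeSet, ρv x ≠ ρe e) ∧
    ∀ x y, H.Adj x y → ({ρv x, ρv y, ρe s(x, y)} : Finset V) ∈ E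

/-- Number of edges (as functions picking one vertex per part) inside the sets `U i`. -/
noncomputable def kCount {V : Type*} {k : ℕ} (E : Set (Fin k → V)) (U : Fin k → Finset V) : ℕ :=
  ((Fintype.piFinset U).filter (fun e => e ∈ E)).card

/-- Density of a `k`-tuple in a `k`-partite `k`-graph. -/
noncomputable def kDensity {V : Type*} {k : ℕ} (E : Set (Fin k → V)) (U : Fin k → Finset V) : ℝ :=
  (kCount E U : ℝ) / ∏ i, ((U i).card : ℝ)

/-- Degree of `x` as a vertex of the `i`-th part of a `k`-partite `k`-graph. -/
noncomputable def kDegAt {V : Type*} [Fintype V] {k : ℕ} (E : Set (Fin k → V))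
    (i : Fin k) (x : V) : ℕ :=
  ((univ : Finset (Fin k → V)).filter (fun e => e ∈ E ∧ e i = x)).card

/-- Weak ε-regularity of a `k`-tuple in a `k`-partite `k`-graph. -/
def KTupleReg {V : Type*} {k : ℕ} (ε : ℝ) (E : Set (Fin k → V)) (Wp : Fin k → Finset V) : Prop :=
  ∀ U : Fin k → Finset V, (∀ i, U i ⊆ Wp i) →
    (∀ i, ε * ((Wp i).card : ℝ) ≤ ((U i).card : ℝ)) →
    |kDensity E U - kDensity E Wp| < ε

/-- Weak `(ε,d)`-regularity of a `k`-partite `k`-graph with parts `P`. -/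
def KReg {V : Type*} {k : ℕ} (ε d : ℝ) (E : Set (Fin k → V)) (P : Fin k → Finset V) : Prop :=
  d ≤ kDensity E P ∧
  ∀ U : Fin k → Finset V, (∀ i, U i ⊆ P i) →
    (∀ i, ε * ((P i).card : ℝ) ≤ ((U i).card : ℝ)) →
    |kDensity E U - kDensity E P| < ε

/-- Weak `(ε,d)`-superregularity of a `k`-partite `k`-graph with parts `P`. -/
def KSuper {V : Type*} [Fintype V] {k : ℕ} (ε d : ℝ) (E : Set (Fin k → V))
    (P : Fin k → Finset V) : Prop :=
  KReg ε d E P ∧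
  ∀ i, ∀ x ∈ P i, d * (∏ j, ((P j).card : ℝ)) / ((P i).card : ℝ) ≤ (kDegAt E i x : ℝ)

/-- Weak `(ε,d)`-half-superregularity of a `k`-partite `k`-graph with parts `P`. -/
def KHalfSuper {V : Type*} [Fintype V] {k : ℕ} (ε d : ℝ) (E : Set (Fin k → V))
    (P : Fin k → Finset V) : Prop :=
  (∀ U : Fin k → Finset V, (∀ i, U i ⊆ P i) →
    (∀ i, ε * ((P i).card : ℝ) ≤ ((U i).card : ℝ)) →
    d ≤ kDensity E U) ∧
  ∀ i, ∀ x ∈ P i, d * (∏ j, ((P j).card : ℝ)) / ((P i).card : ℝ) ≤ (kDegAt E i x : ℝ)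

/-- An `R`-template: vertex clusters `Vc`, colour clusters `Cc i j` (one for each
edge `ij` of `R`), and for each colour `c ∈ Cc i j` a bipartite graph `Ge c i j`
with parts `Vc i`, `Vc j`.  The graph `G_c` of the collection is the union of the
`Ge c i j` over the edges `ij` of `R` whose colour cluster contains `c`. -/
structure GTemplate (V C : Type*) (r : ℕ) where
  R : SimpleGraph (Fin r)
  Vc : Fin r → Finset V
  Cc : Fin r → Fin r → Finset C
  Ge : C → Fin r → Fin r → SimpleGraph V
  Cc_symm : ∀ i j, Cc i j = Cc j i
  Ge_symm : ∀ c i j, Ge c i j = Ge c j i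
  Vc_disj : ∀ i j, i ≠ j → Disjoint (Vc i) (Vc j)
  Cc_support : ∀ i j, ¬ R.Adj i j → Cc i j = ∅
  Ge_support : ∀ c i j, c ∉ Cc i j → Ge c i j = ⊥
  Ge_bipartite : ∀ c i j x y, (Ge c i j).Adj x y →
    (x ∈ Vc i ∧ y ∈ Vc j) ∨ (x ∈ Vc j ∧ y ∈ Vc i)

namespace GTemplate

variable {V C : Type*} {r : ℕ}

/-- The graph `G_c` of the template: the union of the bipartite pieces. -/
noncomputable def Gc (T : GTemplate V C r) (c : C) : SimpleGraph V :=
  ⨆ i, ⨆ j, T.Ge c i j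

/-- `T` is an `R`-template with parameters `(m, ε, d, δ)`. -/
def IsParam (T : GTemplate V C r) (m ε d δ : ℝ) : Prop :=
  (∀ j, m ≤ ((T.Vc j).card : ℝ) ∧ ((T.Vc j).card : ℝ) ≤ m / δ) ∧
  (∀ i j, T.R.Adj i j → δ * m ≤ ((T.Cc i j).card : ℝ)) ∧
  (∀ i j, T.R.Adj i j →
    ColReg ε d (fun c => T.Ge c i j) (T.Vc i) (T.Vc j) (T.Cc i j))

/-- `T` is a super `R`-template with parameters `(m, ε, d, δ)`. -/
def IsSuperParam (T : GTemplate V C r) (m ε d δ : ℝ) : Prop :=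
  (∀ j, m ≤ ((T.Vc j).card : ℝ) ∧ ((T.Vc j).card : ℝ) ≤ m / δ) ∧
  (∀ i j, T.R.Adj i j → δ * m ≤ ((T.Cc i j).card : ℝ)) ∧
  (∀ i j, T.R.Adj i j →
    ColSuperReg ε d (fun c => T.Ge c i j) (T.Vc i) (T.Vc j) (T.Cc i j))

/-- `T` is a half-super `R`-template with parameters `(m, ε, d, δ)`. -/
def IsHalfSuperParam (T : GTemplate V C r) (m ε d δ : ℝ) : Prop :=
  (∀ j, m ≤ ((T.Vc j).card : ℝ) ∧ ((T.Vc j).card : ℝ) ≤ m / δ) ∧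
  (∀ i j, T.R.Adj i j → δ * m ≤ ((T.Cc i j).card : ℝ)) ∧
  (∀ i j, T.R.Adj i j →
    ColHalfSuperReg ε d (fun c => T.Ge c i j) (T.Vc i) (T.Vc j) (T.Cc i j))

/-- `T` is a semi-super `R`-template with parameters `(m, ε, d, δ)`. -/
def IsSemiSuperParam (T : GTemplate V C r) (m ε d δ : ℝ) : Prop :=
  T.IsParam m ε d δ ∧
  ∀ i j, T.R.Adj i j →
    (∀ v ∈ T.Vc i, d * ((T.Vc j).card : ℝ) * ((T.Cc i j).card : ℝ) ≤
      ∑ c ∈ T.Cc i j, (degIn (T.Ge c i j) v (T.Vc j) : ℝ)) ∧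
    (∀ v ∈ T.Vc j, d * ((T.Vc i).card : ℝ) * ((T.Cc i j).card : ℝ) ≤
      ∑ c ∈ T.Cc i j, (degIn (T.Ge c i j) v (T.Vc i) : ℝ))

/-- The template is rainbow: the colour clusters are pairwise disjoint. -/
def Rainbow (T : GTemplate V C r) : Prop :=
  ∀ i j k l, T.R.Adj i j → T.R.Adj k l → s(i, j) ≠ s(k, l) →
    Disjoint (T.Cc i j) (T.Cc k l)

/-- Adjacency in the `l`-thick graph of the template, between clusters `i` and `j`. -/
def ThickAdj (T : GTemplate V C r) (l : ℝ) (i j : Fin r) (x y : V) : Prop :=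
  l * ((T.Cc i j).card : ℝ) ≤
    (((T.Cc i j).filter (fun c => (T.Ge c i j).Adj x y)).card : ℝ)

end GTemplate

/-! ## Averages over the fibres of a colouring -/

noncomputable def avgOn {X K : Type*} [Fintype X] (κ : X → K) (F : X → ℝ) (x : X) : ℝ :=
  (∑ y with κ y = κ x, F y) / ((univ.filter (fun y => κ y = κ x)).card : ℝ)

noncomputable def energyOf {X K : Type*} [Fintype X] (κ : X → K) (F : X → ℝ) : ℝ :=
  ∑ x, (avgOn κ F x) ^ 2

lemma avgOn_congr {X K : Type*} [Fintype X] (κ : X → K) (F : X → ℝ) {x y : X}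
    (h : κ x = κ y) : avgOn κ F x = avgOn κ F y := by
  unfold avgOn
  rw [h]

lemma avgOn_mul {X K : Type*} [Fintype X] (κ : X → K) (F : X → ℝ) (h : X → ℝ)
    (hh : ∀ x y, κ x = κ y → h x = h y) :
    ∑ x, avgOn κ F x * h x = ∑ x, F x * h x := by
  have h1 : ∀ x, avgOn κ F x * h x = ∑ y, if κ y = κ x then
      F y * h y / ((univ.filter (fun z => κ z = κ y)).card : ℝ) else 0 := by
    intro x
    unfold avgOn
    rw [Finset.sum_div, Finset.sum_mul, Finset.sum_filter]
    refine Finset.sum_congr rfl fun y _ => ?_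
    split_ifs with hy
    · rw [hh x y hy.symm, hy]; ring
    · rfl
  simp_rw [h1]
  rw [Finset.sum_comm]
  refine Finset.sum_congr rfl fun y _ => ?_
  rw [← Finset.sum_filter, Finset.sum_const, nsmul_eq_mul]
  have h2 : (univ.filter (fun x => κ y = κ x)) = (univ.filter (fun z => κ z = κ y)) := by
    ext z; simp [eq_comm]
  rw [h2]
  have h3 : ((univ.filter (fun z => κ z = κ y)).card : ℝ) ≠ 0 := by
    have : 0 < (univ.filter (fun z => κ z = κ y)).card := Finset.card_pos.2 ⟨y, by simp⟩
    positivity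
  field_simp

lemma energy_pyth {X K K' : Type*} [Fintype X] (κ : X → K) (κ' : X → K') (F : X → ℝ)
    (href : ∀ x y, κ' x = κ' y → κ x = κ y) :
    ∑ x, (avgOn κ' F x - avgOn κ F x) ^ 2 = energyOf κ' F - energyOf κ F := by
  have h1 : ∑ x, avgOn κ' F x * avgOn κ F x = ∑ x, F x * avgOn κ F x :=
    avgOn_mul κ' F _ fun x y h => avgOn_congr κ F (href x y h)
  have h2 : ∑ x, avgOn κ F x * avgOn κ F x = ∑ x, F x * avgOn κ F x :=
    avgOn_mul κ F _ fun x y h => avgOn_congr κ F h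
  have h3 : ∑ x, (avgOn κ' F x - avgOn κ F x) ^ 2 = energyOf κ' F
      - 2 * ∑ x, avgOn κ' F x * avgOn κ F x + ∑ x, avgOn κ F x * avgOn κ F x := by
    unfold energyOf
    rw [Finset.mul_sum, ← Finset.sum_sub_distrib, ← Finset.sum_add_distrib]
    refine Finset.sum_congr rfl fun x _ => by ring
  have h4 : energyOf κ F = ∑ x, avgOn κ F x * avgOn κ F x :=
    Finset.sum_congr rfl fun x _ => by ring
  rw [h3, h4, h1, h2]; ring

lemma energy_mono {X K K' : Type*} [Fintype X] (κ : X → K) (κ' : X → K') (F : X → ℝ)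
    (href : ∀ x y, κ' x = κ' y → κ x = κ y) : energyOf κ F ≤ energyOf κ' F := by
  have h := energy_pyth κ κ' F href
  have : 0 ≤ ∑ x, (avgOn κ' F x - avgOn κ F x) ^ 2 := Finset.sum_nonneg fun x _ => sq_nonneg _
  linarith

lemma energy_le {X K : Type*} [Fintype X] (κ : X → K) (F : X → ℝ)
    (h0 : ∀ x, 0 ≤ F x) (h1 : ∀ x, F x ≤ 1) : energyOf κ F ≤ Fintype.card X := by
  have : ∀ x, (avgOn κ F x) ^ 2 ≤ 1 := by
    intro x
    have a : 0 ≤ avgOn κ F x := by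
      unfold avgOn
      exact div_nonneg (Finset.sum_nonneg fun y _ => h0 y) (by positivity)
    have b : avgOn κ F x ≤ 1 := by
      unfold avgOn
      refine div_le_one_of_le₀ ?_ (by positivity)
      refine (Finset.sum_le_sum fun y _ => h1 y).trans ?_
      simp
    exact pow_le_one₀ a b
  calc energyOf κ F ≤ ∑ x : X, (1 : ℝ) := Finset.sum_le_sum fun x _ => this x
    _ = Fintype.card X := by simp

lemma energy_incr {X K K' T : Type*} [Fintype X] (κ : X → K) (κ' : X → K') (F : X → ℝ)
    (href : ∀ x y, κ' x = κ' y → κ x = κ y) (I : Finset T) (S : T → Finset X) (D : T → ℝ)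
    (δ s : ℝ) (hδ : 0 ≤ δ) (hs : 0 < s)
    (hdisj : ∀ t ∈ I, ∀ t' ∈ I, t ≠ t' → Disjoint (S t) (S t'))
    (hsat : ∀ t ∈ I, ∀ x y, κ' x = κ' y → x ∈ S t → y ∈ S t)
    (hD : ∀ t ∈ I, ∀ x ∈ S t, avgOn κ F x = D t)
    (hcard : ∀ t ∈ I, s ≤ ((S t).card : ℝ))
    (hdev : ∀ t ∈ I, δ ≤ |(∑ x ∈ S t, F x) / ((S t).card : ℝ) - D t|) :
    energyOf κ F + I.card * (δ ^ 2 * s) ≤ energyOf κ' F := by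
  have h := energy_pyth κ κ' F href
  have hblock : ∀ t ∈ I, δ ^ 2 * s ≤ ∑ x ∈ S t, (avgOn κ' F x - avgOn κ F x) ^ 2 := by
    intro t ht
    have hc : 0 < ((S t).card : ℝ) := hs.trans_le (hcard t ht)
    have e1 : ∑ x ∈ S t, avgOn κ' F x = ∑ x ∈ S t, F x := by
      have := avgOn_mul κ' F (fun x => if x ∈ S t then 1 else 0) (by
        intro x y hxy
        have : x ∈ S t ↔ y ∈ S t := ⟨hsat t ht x y hxy, hsat t ht y x hxy.symm⟩
        simp [this])
      simpa [Finset.sum_ite_mem] using this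
    have e2 : ∑ x ∈ S t, avgOn κ F x = (S t).card * D t := by
      rw [Finset.sum_congr rfl (hD t ht)]; simp
    have cs : (∑ x ∈ S t, (avgOn κ' F x - avgOn κ F x)) ^ 2 ≤
        (S t).card * ∑ x ∈ S t, (avgOn κ' F x - avgOn κ F x) ^ 2 := sq_sum_le_card_mul_sum_sq
    rw [Finset.sum_sub_distrib, e1, e2] at cs
    set A := ∑ x ∈ S t, F x
    set c := ((S t).card : ℝ)
    have e3 : A - c * D t = c * (A / c - D t) := by field_simp
    rw [e3, mul_pow] at cs
    have e4 : δ ^ 2 ≤ (A / c - D t) ^ 2 := by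
      rw [← sq_abs (A / c - D t)]
      exact pow_le_pow_left₀ hδ (hdev t ht) 2
    have e5 : c * (A / c - D t) ^ 2 ≤ ∑ x ∈ S t, (avgOn κ' F x - avgOn κ F x) ^ 2 := by
      have : c * (c * (A / c - D t) ^ 2) ≤ c * ∑ x ∈ S t, (avgOn κ' F x - avgOn κ F x) ^ 2 := by
        nlinarith
      exact le_of_mul_le_mul_left this hc
    calc δ ^ 2 * s ≤ (A / c - D t) ^ 2 * c :=
          mul_le_mul e4 (hcard t ht) hs.le (sq_nonneg _)
      _ ≤ _ := by linarith
  have hsum : ∑ t ∈ I, ∑ x ∈ S t, (avgOn κ' F x - avgOn κ F x) ^ 2 ≤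
      ∑ x, (avgOn κ' F x - avgOn κ F x) ^ 2 := by
    rw [← Finset.sum_biUnion (fun t ht t' ht' hne => hdisj t ht t' ht' hne)]
    exact Finset.sum_le_sum_of_subset_of_nonneg (Finset.subset_univ _) fun _ _ _ => sq_nonneg _
  have h3 : (I.card : ℝ) * (δ ^ 2 * s) ≤
      ∑ t ∈ I, ∑ x ∈ S t, (avgOn κ' F x - avgOn κ F x) ^ 2 := by
    have := Finset.sum_le_sum hblock
    simpa using this
  linarith

/-! ## Chopping a colouring into pieces of equal size -/

lemma chop_aux {V K : Type} [Fintype K] (c : V → K) (m : ℕ) (hm : 0 < m) :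
    ∀ (n : ℕ) (S : Finset V), S.card = n → ∃ Q : Finset (Finset V),
      (∀ A ∈ Q, A ⊆ S ∧ A.card = m ∧ ∀ x ∈ A, ∀ y ∈ A, c x = c y) ∧
      (∀ A ∈ Q, ∀ B ∈ Q, A ≠ B → Disjoint A B) ∧
      S.card ≤ Q.card * m + Fintype.card K * m := by
  intro n
  induction n using Nat.strong_induction_on with
  | _ n ih =>
  intro S hS
  by_cases hle : S.card ≤ Fintype.card K * m
  · exact ⟨∅, by simp, by simp, by simpa using hle⟩
  · push Not at hle
    obtain ⟨k, -, hk⟩ := Finset.exists_lt_card_fiber_of_mul_lt_card_of_maps_to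
      (s := S) (t := (univ : Finset K)) (f := c) (n := m) (fun _ _ => Finset.mem_univ _)
      (by simpa using hle)
    obtain ⟨A, hA, hAm⟩ := Finset.exists_subset_card_eq hk.le
    have hAS : A ⊆ S := hA.trans (Finset.filter_subset _ _)
    have hcard : (S \ A).card = S.card - m := by rw [Finset.card_sdiff_of_subset hAS, hAm]
    have hmS : m ≤ S.card := hAm ▸ Finset.card_le_card hAS
    obtain ⟨Q, h1, h2, h3⟩ := ih (S \ A).card (by omega) (S \ A) rfl
    have hdA : ∀ B ∈ Q, Disjoint A B := fun B hB =>
      (Finset.disjoint_of_subset_left (h1 B hB).1 Finset.sdiff_disjoint).symm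
    have hAQ : A ∉ Q := by
      intro h
      have := hdA A h
      rw [disjoint_self] at this
      simp only [Finset.bot_eq_empty] at this
      rw [this] at hAm
      simp at hAm
      omega
    refine ⟨insert A Q, ?_, ?_, ?_⟩
    · intro B hB
      rcases Finset.mem_insert.1 hB with rfl | hB
      · refine ⟨hAS, hAm, fun x hx y hy => ?_⟩
        rw [(Finset.mem_filter.1 (hA hx)).2, (Finset.mem_filter.1 (hA hy)).2]
      · exact ⟨(h1 B hB).1.trans Finset.sdiff_subset, (h1 B hB).2⟩
    · intro B hB C hC hne
      rcases Finset.mem_insert.1 hB with hB1 | hB1 <;> rcases Finset.mem_insert.1 hC with hC1 | hC1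
      · exact absurd (hB1.trans hC1.symm) hne
      · exact hB1 ▸ hdA C hC1
      · exact hC1 ▸ (hdA B hB1).symm
      · exact h2 B hB1 C hC1 hne
    · rw [Finset.card_insert_of_notMem hAQ, add_mul, one_mul]
      omega

lemma chop {V K : Type} [Fintype V] [Fintype K] (c : V → K) (m : ℕ) (hm : 0 < m) :
    ∃ (L : ℕ) (P : Fin L → Finset V), (∀ l, (P l).card = m) ∧
      (∀ l, ∀ x ∈ P l, ∀ y ∈ P l, c x = c y) ∧
      (∀ l l', l ≠ l' → Disjoint (P l) (P l')) ∧
      Fintype.card V ≤ L * m + Fintype.card K * m := by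
  obtain ⟨Q, h1, h2, h3⟩ := chop_aux c m hm _ (univ : Finset V) rfl
  refine ⟨Q.card, fun l => (Q.equivFin.symm l).1, fun l => (h1 _ (Q.equivFin.symm l).2).2.1,
    fun l => (h1 _ (Q.equivFin.symm l).2).2.2, fun l l' hne => h2 _ (Q.equivFin.symm l).2 _
      (Q.equivFin.symm l').2 fun h => hne ?_, by simpa using h3⟩
  exact Q.equivFin.symm.injective (Subtype.ext h)

/-! ## The weak regularity lemma -/

def Reg3 {V : Type*} (δ : ℝ) (E : Set (Finset V)) (V₁ V₂ V₃ : Finset V) : Prop :=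
  ∀ U₁ ⊆ V₁, ∀ U₂ ⊆ V₂, ∀ U₃ ⊆ V₃,
    δ * (V₁.card : ℝ) ≤ (U₁.card : ℝ) → δ * (V₂.card : ℝ) ≤ (U₂.card : ℝ) →
    δ * (V₃.card : ℝ) ≤ (U₃.card : ℝ) →
    |tripDensity E U₁ U₂ U₃ - tripDensity E V₁ V₂ V₃| < δ

noncomputable def indE {V : Type*} (E : Set (Finset V)) (p : V × V × V) : ℝ :=
  if ({p.1, p.2.1, p.2.2} : Finset V) ∈ E then 1 else 0

def tri {V K : Type*} (c : V → K) (p : V × V × V) : K × K × K := (c p.1, c p.2.1, c p.2.2)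

lemma tripDensity_eq {V : Type*} (E : Set (Finset V)) (U₁ U₂ U₃ : Finset V) :
    tripDensity E U₁ U₂ U₃ =
      (∑ p ∈ U₁ ×ˢ U₂ ×ˢ U₃, indE E p) / ((U₁ ×ˢ U₂ ×ˢ U₃).card : ℝ) := by
  unfold tripDensity tripCount indE
  rw [Finset.sum_boole, Finset.card_product, Finset.card_product]
  push_cast
  rw [mul_assoc]

lemma avgOn_eq {X K : Type*} [Fintype X] (κ : X → K) (F : X → ℝ) (x : X) (B : Finset X)
    (h : ∀ y, κ y = κ x ↔ y ∈ B) : avgOn κ F x = (∑ y ∈ B, F y) / (B.card : ℝ) := by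
  have hB : (univ.filter (fun y => κ y = κ x)) = B := by
    ext y; simp [h]
  unfold avgOn
  rw [hB]

set_option maxHeartbeats 2000000 in
lemma step_incr {V K : Type} [Fintype V] (E : Set (Finset V)) (c : V → K) (L m : ℕ)
    (P : Fin L → Finset V) (hm : 0 < m) (hP : ∀ l, (P l).card = m)
    (hmono : ∀ l, ∀ x ∈ P l, ∀ y ∈ P l, c x = c y)
    (hdisj : ∀ l l', l ≠ l' → Disjoint (P l) (P l')) (δ : ℝ) (hδ : 0 < δ)
    (hbad : δ * (L : ℝ) ^ 3 <
      ((univ.filter (fun t : Fin L × Fin L × Fin L =>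
        ¬ Reg3 δ E (P t.1) (P t.2.1) (P t.2.2))).card : ℝ)) :
    ∃ c' : V → K × (Fin L → Bool) × (Fin L × Fin L × Fin L → Bool × Bool × Bool),
      energyOf (tri c) (indE E) + (δ * (L : ℝ) ^ 3) * (δ ^ 2 * (δ * m) ^ 3) ≤
        energyOf (tri c') (indE E) := by
  set I := univ.filter (fun t : Fin L × Fin L × Fin L =>
        ¬ Reg3 δ E (P t.1) (P t.2.1) (P t.2.2)) with hI
  have hw : ∀ t : Fin L × Fin L × Fin L, ∃ U : Finset V × Finset V × Finset V, t ∈ I →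
      U.1 ⊆ P t.1 ∧ U.2.1 ⊆ P t.2.1 ∧ U.2.2 ⊆ P t.2.2 ∧
      δ * m ≤ (U.1.card : ℝ) ∧ δ * m ≤ (U.2.1.card : ℝ) ∧ δ * m ≤ (U.2.2.card : ℝ) ∧
      δ ≤ |tripDensity E U.1 U.2.1 U.2.2 - tripDensity E (P t.1) (P t.2.1) (P t.2.2)| := by
    intro t
    by_cases ht : t ∈ I
    · have := (Finset.mem_filter.1 ht).2
      unfold Reg3 at this
      push Not at this
      obtain ⟨U₁, h1, U₂, h2, U₃, h3, c1, c2, c3, hd⟩ := this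
      rw [hP] at c1 c2 c3
      exact ⟨(U₁, U₂, U₃), fun _ => ⟨h1, h2, h3, c1, c2, c3, hd⟩⟩
    · exact ⟨(∅, ∅, ∅), fun h => absurd h ht⟩
  choose U hU using hw
  let c1 : V → K × (Fin L → Bool) := fun v => (c v, fun l => decide (v ∈ P l))
  let c' : V → K × (Fin L → Bool) × (Fin L × Fin L × Fin L → Bool × Bool × Bool) :=
    fun v => (c v, fun l => decide (v ∈ P l),
      fun t => (decide (v ∈ (U t).1), decide (v ∈ (U t).2.1), decide (v ∈ (U t).2.2)))
  have hc1 : ∀ x y, c1 x = c1 y → ∀ l, x ∈ P l → y ∈ P l := by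
    intro x y h l hx
    have := congrFun (congrArg Prod.snd h) l
    simp only [c1, decide_eq_decide] at this
    exact this.1 hx
  have hc1' : ∀ l, ∀ x ∈ P l, ∀ y ∈ P l, c1 x = c1 y := by
    intro l x hx y hy
    refine Prod.ext (hmono l x hx y hy) (funext fun l' => ?_)
    simp only [c1, decide_eq_decide]
    by_cases hl : l = l'
    · subst hl; simp [hx, hy]
    · have := hdisj l l' hl
      rw [Finset.disjoint_left] at this
      simp [this hx, this hy]
  have hc'1 : ∀ x y, c' x = c' y → c1 x = c1 y := by
    intro x y h
    simp only [c', Prod.mk.injEq] at h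
    simp only [c1, Prod.mk.injEq]
    exact ⟨h.1, h.2.1⟩
  have hc'U : ∀ x y, c' x = c' y → ∀ t, (x ∈ (U t).1 → y ∈ (U t).1) ∧
      (x ∈ (U t).2.1 → y ∈ (U t).2.1) ∧ (x ∈ (U t).2.2 → y ∈ (U t).2.2) := by
    intro x y h t
    simp only [c', Prod.mk.injEq] at h
    have := congrFun h.2.2 t
    simp only [Prod.mk.injEq, decide_eq_decide] at this
    exact ⟨this.1.1, this.2.1.1, this.2.2.1⟩
  refine ⟨c', ?_⟩
  have hm1 : energyOf (tri c) (indE E) ≤ energyOf (tri c1) (indE E) := by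
    apply energy_mono
    intro x y h
    simp only [tri, c1, Prod.mk.injEq] at h ⊢
    exact ⟨h.1.1, h.2.1.1, h.2.2.1⟩
  have hm2 := energy_incr (tri c1) (tri c') (indE E) (by
      intro x y h
      simp only [tri, Prod.mk.injEq] at h ⊢
      exact ⟨hc'1 _ _ h.1, hc'1 _ _ h.2.1, hc'1 _ _ h.2.2⟩)
    I (fun t => (U t).1 ×ˢ (U t).2.1 ×ˢ (U t).2.2)
    (fun t => tripDensity E (P t.1) (P t.2.1) (P t.2.2)) δ ((δ * m) ^ 3) hδ.le (by positivity)
    (by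
      intro t ht t' ht' hne
      rw [Finset.disjoint_left]
      intro p hp hp'
      simp only [Finset.mem_product] at hp hp'
      have key : ∀ l l' x, x ∈ P l → x ∈ P l' → l = l' := by
        intro l l' x h h'
        by_contra hl
        exact Finset.disjoint_left.1 (hdisj l l' hl) h h'
      obtain ⟨a1, a2, a3, -⟩ := hU t ht
      obtain ⟨b1, b2, b3, -⟩ := hU t' ht'
      exact hne (Prod.ext (key _ _ _ (a1 hp.1) (b1 hp'.1)) (Prod.ext
        (key _ _ _ (a2 hp.2.1) (b2 hp'.2.1)) (key _ _ _ (a3 hp.2.2) (b3 hp'.2.2)))))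
    (by
      intro t ht x y h hx
      simp only [tri, Prod.mk.injEq] at h
      simp only [Finset.mem_product] at hx ⊢
      exact ⟨(hc'U _ _ h.1 t).1 hx.1, (hc'U _ _ h.2.1 t).2.1 hx.2.1,
        (hc'U _ _ h.2.2 t).2.2 hx.2.2⟩)
    (by
      intro t ht x hx
      obtain ⟨a1, a2, a3, -⟩ := hU t ht
      simp only [Finset.mem_product] at hx
      have hfib : ∀ y, tri c1 y = tri c1 x ↔ y ∈ P t.1 ×ˢ P t.2.1 ×ˢ P t.2.2 := by
        intro y
        simp only [Finset.mem_product, tri, Prod.mk.injEq]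
        constructor
        · rintro ⟨h1, h2, h3⟩
          exact ⟨hc1 _ _ h1.symm _ (a1 hx.1), hc1 _ _ h2.symm _ (a2 hx.2.1),
            hc1 _ _ h3.symm _ (a3 hx.2.2)⟩
        · rintro ⟨h1, h2, h3⟩
          exact ⟨hc1' _ _ h1 _ (a1 hx.1), hc1' _ _ h2 _ (a2 hx.2.1),
            hc1' _ _ h3 _ (a3 hx.2.2)⟩
      rw [avgOn_eq _ _ _ _ hfib, tripDensity_eq])
    (by
      intro t ht
      obtain ⟨-, -, -, b1, b2, b3, -⟩ := hU t ht
      rw [Finset.card_product, Finset.card_product, Nat.cast_mul, Nat.cast_mul]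
      have h0 : 0 < δ * m := by positivity
      calc (δ * m) ^ 3 = (δ * m) * ((δ * m) * (δ * m)) := by ring
        _ ≤ _ := mul_le_mul b1 (mul_le_mul b2 b3 h0.le (by positivity)) (by positivity)
          (by positivity))
    (by
      intro t ht
      obtain ⟨-, -, -, -, -, -, hd⟩ := hU t ht
      rw [tripDensity_eq E (U t).1] at hd
      exact hd)
  have h0 : (δ * (L : ℝ) ^ 3) * (δ ^ 2 * (δ * m) ^ 3) ≤ I.card * (δ ^ 2 * (δ * m) ^ 3) :=
    mul_le_mul_of_nonneg_right hbad.le (by positivity)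
  linarith

/-- A regular partition, with leftover. -/
def GoodPart {V : Type} [Fintype V] (E : Set (Finset V)) (δ : ℝ) (L₀ N : ℕ) : Prop :=
  ∃ (L m : ℕ) (P : Fin L → Finset V), 0 < m ∧ (∀ l, (P l).card = m) ∧
    (∀ l l', l ≠ l' → Disjoint (P l) (P l')) ∧ L₀ ≤ L ∧ L ≤ N ∧
    (Fintype.card V : ℝ) ≤ L * m + δ * Fintype.card V ∧
    ((univ.filter (fun t : Fin L × Fin L × Fin L =>
        ¬ Reg3 δ E (P t.1) (P t.2.1) (P t.2.2))).card : ℝ) ≤ δ * (L : ℝ) ^ 3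

lemma step_lemma (δ : ℝ) (hδ : 0 < δ) (hδ1 : δ ≤ 1 / 2) (L₀ M : ℕ) :
    ∃ N M' : ℕ, ∀ (V : Type) [Fintype V], N ≤ Fintype.card V → ∀ (E : Set (Finset V))
      (K : Type) [Fintype K], Fintype.card K ≤ M → ∀ c : V → K,
      GoodPart E δ L₀ N ∨ ∃ (K' : Type) (_ : Fintype K') (c' : V → K'),
        Fintype.card K' ≤ M' ∧ energyOf (tri c) (indE E) +
          (δ ^ 6 / 8) * (Fintype.card V : ℝ) ^ 3 ≤ energyOf (tri c') (indE E) := by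
  set Q : ℕ := M + L₀ + 1 with hQ
  set R : ℕ := ⌈2 * (Q : ℝ) / δ⌉₊ with hR
  have hQ0 : (0 : ℝ) < Q := by rw [hQ]; positivity
  refine ⟨R, M * (2 ^ R * 8 ^ (R * (R * R))), ?_⟩
  intro V _ hN E K _ hK c
  set n := Fintype.card V with hn
  have hRn : 2 * (Q : ℝ) / δ ≤ n := (Nat.le_ceil _).trans (Nat.cast_le.2 hN)
  have hn2 : 2 * (Q : ℝ) ≤ n * δ := by rwa [div_le_iff₀ hδ] at hRn
  have hn0 : (0 : ℝ) < n := by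
    have : 0 < 2 * (Q : ℝ) / δ := by positivity
    linarith
  set y : ℝ := δ * n / Q with hy
  have hy2 : 2 ≤ y := by rw [hy, le_div_iff₀ hQ0]; linarith
  set m : ℕ := ⌊y⌋₊ with hm
  have hmy : (m : ℝ) ≤ y := Nat.floor_le (by linarith)
  have hym : y < m + 1 := Nat.lt_floor_add_one y
  have hm1 : (1 : ℝ) < m := by linarith
  have hm0 : 0 < m := by
    have : (0 : ℝ) < m := by linarith
    exact_mod_cast this
  have hyQ : y * Q = δ * n := by rw [hy]; field_simp
  obtain ⟨L, P, hP, hmono, hdisj, hcov⟩ := chop c m hm0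
  have hcov' : (n : ℝ) ≤ L * m + δ * n := by
    have h1 : (n : ℝ) ≤ L * m + Fintype.card K * m := by exact_mod_cast hcov
    have h2 : (Fintype.card K : ℝ) ≤ Q := by
      have : Fintype.card K ≤ Q := by omega
      exact_mod_cast this
    have h3 : (Fintype.card K : ℝ) * m ≤ Q * y :=
      mul_le_mul h2 hmy (by positivity) hQ0.le
    linarith
  have hLm : L * m ≤ n := by
    have h1 : ((univ : Finset (Fin L)).biUnion P).card = L * m := by
      rw [Finset.card_biUnion (fun l _ l' _ h => hdisj l l' h)]
      simp [hP]
    rw [← h1]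
    exact Finset.card_le_univ _
  have hLm' : (L : ℝ) * m ≤ n := by exact_mod_cast hLm
  have hLR : L ≤ R := by
    have h1 : (L : ℝ) ≤ 2 * Q / δ := by
      rw [le_div_iff₀ hδ]
      have h2 : (L : ℝ) * y ≤ 2 * n := by
        have : (L : ℝ) * y ≤ L * (2 * m) := by gcongr; linarith
        linarith
      have h3 : (L : ℝ) * δ * n ≤ 2 * Q * n := by
        calc (L : ℝ) * δ * n = L * y * Q := by rw [mul_assoc, ← hyQ]; ring
          _ ≤ 2 * n * Q := by gcongr
          _ = _ := by ring
      exact le_of_mul_le_mul_right h3 hn0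
    exact (Nat.cast_le (α := ℝ)).1 (h1.trans (Nat.le_ceil _))
  have hQL : (Q : ℝ) ≤ L := by
    have h1 : (n : ℝ) / 2 ≤ L * y := by
      have : (L : ℝ) * m ≤ L * y := by gcongr
      nlinarith
    have h2 : (n : ℝ) * Q ≤ n * L := by
      have : (n : ℝ) / 2 * Q ≤ L * (δ * n) := by rw [← hyQ]; nlinarith
      have h3 : (L : ℝ) * (δ * n) ≤ L * (1 / 2 * n) := by gcongr
      nlinarith
    exact le_of_mul_le_mul_left h2 hn0
  have hQL' : Q ≤ L := by exact_mod_cast hQL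
  by_cases hbad : ((univ.filter (fun t : Fin L × Fin L × Fin L =>
        ¬ Reg3 δ E (P t.1) (P t.2.1) (P t.2.2))).card : ℝ) ≤ δ * (L : ℝ) ^ 3
  · left
    exact ⟨L, m, P, hm0, hP, hdisj, by omega, hLR, hcov', hbad⟩
  · right
    push Not at hbad
    obtain ⟨c', hc'⟩ := step_incr E c L m P hm0 hP hmono hdisj δ hδ hbad
    refine ⟨_, inferInstance, c', ?_, ?_⟩
    · simp only [Fintype.card_prod, Fintype.card_fun, Fintype.card_bool, Fintype.card_fin]
      have h8 : 2 * (2 * 2) = 8 := by norm_num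
      rw [h8]
      gcongr <;> norm_num
    · refine le_trans ?_ hc'
      have h1 : (n : ℝ) / 2 ≤ L * m := by nlinarith
      have h2 : ((n : ℝ) / 2) ^ 3 ≤ (L * m) ^ 3 := by gcongr
      have h3 : (δ * (L : ℝ) ^ 3) * (δ ^ 2 * (δ * m) ^ 3) = δ ^ 6 * (L * m) ^ 3 := by ring
      have h4 : δ ^ 6 / 8 * (n : ℝ) ^ 3 = δ ^ 6 * ((n : ℝ) / 2) ^ 3 := by ring
      rw [h3, h4]
      gcongr

lemma GoodPart.mono {V : Type} [Fintype V] {E : Set (Finset V)} {δ : ℝ} {L₀ N N' : ℕ}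
    (h : GoodPart E δ L₀ N) (hN : N ≤ N') : GoodPart E δ L₀ N' := by
  obtain ⟨L, m, P, h1, h2, h3, h4, h5, h6⟩ := h
  exact ⟨L, m, P, h1, h2, h3, h4, h5.trans hN, h6⟩

theorem weak_regularity (δ : ℝ) (hδ : 0 < δ) (hδ1 : δ ≤ 1 / 2) (L₀ : ℕ) :
    ∃ N : ℕ, ∀ (V : Type) [Fintype V], N ≤ Fintype.card V → ∀ (E : Set (Finset V)),
      GoodPart E δ L₀ N := by
  have main : ∀ k : ℕ, ∃ N M : ℕ, ∀ (V : Type) [Fintype V], N ≤ Fintype.card V →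
      ∀ (E : Set (Finset V)), GoodPart E δ L₀ N ∨
        ∃ (K : Type) (_ : Fintype K) (c : V → K), Fintype.card K ≤ M ∧
          k * ((δ ^ 6 / 8) * (Fintype.card V : ℝ) ^ 3) ≤ energyOf (tri c) (indE E) := by
    intro k
    induction k with
    | zero =>
      refine ⟨0, 1, fun V _ _ E => Or.inr ⟨Unit, inferInstance, fun _ => (), by simp, ?_⟩⟩
      simp only [Nat.cast_zero, zero_mul]
      exact Finset.sum_nonneg fun _ _ => sq_nonneg _
    | succ k ih =>
      obtain ⟨N, M, h⟩ := ih
      obtain ⟨N', M', h'⟩ := step_lemma δ hδ hδ1 L₀ M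
      refine ⟨max N N', M', fun V _ hV E => ?_⟩
      rcases h V ((le_max_left _ _).trans hV) E with hg | ⟨K, _, c, hK, hc⟩
      · exact Or.inl (hg.mono (le_max_left _ _))
      · rcases h' V ((le_max_right _ _).trans hV) E K hK c with hg | ⟨K', i', c', hK', hc'⟩
        · exact Or.inl (hg.mono (le_max_right _ _))
        · refine Or.inr ⟨K', i', c', hK', ?_⟩
          push_cast
          linarith
  obtain ⟨k, hk⟩ := exists_nat_gt (8 / δ ^ 6)
  obtain ⟨N, M, h⟩ := main k
  refine ⟨max N 1, fun V _ hV E => ?_⟩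
  rcases h V ((le_max_left _ _).trans hV) E with hg | ⟨K, _, c, -, hc⟩
  · exact hg.mono (le_max_left _ _)
  · exfalso
    have h1 : energyOf (tri c) (indE E) ≤ (Fintype.card V : ℝ) ^ 3 := by
      refine (energy_le _ _ ?_ ?_).trans (le_of_eq ?_)
      · intro x; unfold indE; split_ifs <;> norm_num
      · intro x; unfold indE; split_ifs <;> norm_num
      · simp only [Fintype.card_prod]; push_cast; ring
    have hn : (0 : ℝ) < (Fintype.card V : ℝ) ^ 3 := by
      have : 0 < Fintype.card V := lt_of_lt_of_le one_pos ((le_max_right _ _).trans hV)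
      positivity
    have h2 : 1 < k * (δ ^ 6 / 8) := by
      rw [div_lt_iff₀ (by positivity)] at hk
      linarith
    nlinarith

/-! ## From the regularity lemma to the degree form -/

lemma tripCount_swap12 {V : Type*} (E : Set (Finset V)) (A B C : Finset V) :
    tripCount E B A C = tripCount E A B C := by
  unfold tripCount
  refine Finset.card_bij' (fun p _ => (p.2.1, p.1, p.2.2)) (fun p _ => (p.2.1, p.1, p.2.2))
    ?_ ?_ (fun _ _ => rfl) (fun _ _ => rfl)
  · intro p hp
    simp only [Finset.mem_filter, Finset.mem_product] at hp ⊢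
    refine ⟨⟨hp.1.2.1, hp.1.1, hp.1.2.2⟩, ?_⟩
    rw [Finset.insert_comm]; exact hp.2
  · intro p hp
    simp only [Finset.mem_filter, Finset.mem_product] at hp ⊢
    refine ⟨⟨hp.1.2.1, hp.1.1, hp.1.2.2⟩, ?_⟩
    rw [Finset.insert_comm]; exact hp.2

lemma tripCount_swap23 {V : Type*} (E : Set (Finset V)) (A B C : Finset V) :
    tripCount E A C B = tripCount E A B C := by
  unfold tripCount
  refine Finset.card_bij' (fun p _ => (p.1, p.2.2, p.2.1)) (fun p _ => (p.1, p.2.2, p.2.1))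
    ?_ ?_ (fun _ _ => rfl) (fun _ _ => rfl)
  · intro p hp
    simp only [Finset.mem_filter, Finset.mem_product] at hp ⊢
    refine ⟨⟨hp.1.1, hp.1.2.2, hp.1.2.1⟩, ?_⟩
    rw [Finset.pair_comm]; exact hp.2
  · intro p hp
    simp only [Finset.mem_filter, Finset.mem_product] at hp ⊢
    refine ⟨⟨hp.1.1, hp.1.2.2, hp.1.2.1⟩, ?_⟩
    rw [Finset.pair_comm]; exact hp.2

lemma tripDensity_swap12 {V : Type*} (E : Set (Finset V)) (A B C : Finset V) :
    tripDensity E B A C = tripDensity E A B C := by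
  unfold tripDensity
  rw [tripCount_swap12]; congr 1; ring

lemma tripDensity_swap23 {V : Type*} (E : Set (Finset V)) (A B C : Finset V) :
    tripDensity E A C B = tripDensity E A B C := by
  unfold tripDensity
  rw [tripCount_swap23]; congr 1; ring

lemma TripReg.swap12 {V : Type*} {ε d : ℝ} {E : Set (Finset V)} {A B C : Finset V}
    (h : TripReg ε d E A B C) : TripReg ε d E B A C := by
  refine ⟨by rw [tripDensity_swap12]; exact h.1, fun U₁ h1 U₂ h2 U₃ h3 c1 c2 c3 => ?_⟩
  rw [tripDensity_swap12 E A, tripDensity_swap12 E U₂]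
  exact h.2 U₂ h2 U₁ h1 U₃ h3 c2 c1 c3

lemma TripReg.swap23 {V : Type*} {ε d : ℝ} {E : Set (Finset V)} {A B C : Finset V}
    (h : TripReg ε d E A B C) : TripReg ε d E A C B := by
  refine ⟨by rw [tripDensity_swap23]; exact h.1, fun U₁ h1 U₂ h2 U₃ h3 c1 c2 c3 => ?_⟩
  rw [tripDensity_swap23 E A, tripDensity_swap23 E U₁ U₃]
  exact h.2 U₁ h1 U₃ h3 U₂ h2 c1 c3 c2

lemma reg_inherit {V : Type*} {δ ε : ℝ} {E : Set (Finset V)} {A B C A' B' C' : Finset V}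
    (h : Reg3 δ E A B C) (hδ1 : δ ≤ 1 / 2) (hε : 2 * δ ≤ ε) (hε0 : 0 < ε)
    (hA : A' ⊆ A) (hB : B' ⊆ B) (hC : C' ⊆ C)
    (cA : (A.card : ℝ) ≤ 2 * A'.card) (cB : (B.card : ℝ) ≤ 2 * B'.card)
    (cC : (C.card : ℝ) ≤ 2 * C'.card) :
    |tripDensity E A' B' C' - tripDensity E A B C| < δ ∧ Reg3 ε E A' B' C' := by
  have aux : ∀ (X X' : Finset V), (X.card : ℝ) ≤ 2 * X'.card → δ * X.card ≤ X'.card := by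
    intro X X' hX
    have h0 : (0 : ℝ) ≤ X.card := by positivity
    nlinarith
  have aux2 : ∀ (X X' U : Finset V), (X.card : ℝ) ≤ 2 * X'.card → ε * X'.card ≤ U.card →
      δ * X.card ≤ U.card := by
    intro X X' U hX hU
    have h0 : (0 : ℝ) ≤ X.card := by positivity
    nlinarith
  have h1 := h A' hA B' hB C' hC (aux _ _ cA) (aux _ _ cB) (aux _ _ cC)
  refine ⟨h1, fun U₁ u1 U₂ u2 U₃ u3 c1 c2 c3 => ?_⟩
  have h2 := h U₁ (u1.trans hA) U₂ (u2.trans hB) U₃ (u3.trans hC) (aux2 _ _ _ cA c1)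
    (aux2 _ _ _ cB c2) (aux2 _ _ _ cC c3)
  rw [abs_lt] at h1 h2 ⊢
  constructor <;> linarith [h1.1, h1.2, h2.1, h2.2]

lemma tripCount_sum {V : Type*} (E : Set (Finset V)) (A B C : Finset V) :
    tripCount E A B C = ∑ v ∈ A, tripCount E {v} B C := by
  unfold tripCount
  simp only [Finset.card_filter, Finset.sum_product, Finset.sum_singleton]

lemma atyp_small {V : Type*} {δ : ℝ} {E : Set (Finset V)} {A B C : Finset V}
    (h : Reg3 δ E A B C) (hδ : 0 < δ) (hδ1 : δ ≤ 1) (hA : 0 < A.card) (hB : 0 < B.card)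
    (hC : 0 < C.card) :
    ((A.filter (fun v => (tripDensity E A B C + δ) * (B.card * C.card) ≤
      (tripCount E {v} B C : ℝ))).card : ℝ) ≤ δ * A.card := by
  set S := A.filter (fun v => (tripDensity E A B C + δ) * (B.card * C.card) ≤
      (tripCount E {v} B C : ℝ)) with hS
  by_contra hcon
  push Not at hcon
  have hB' : (0 : ℝ) < B.card := by exact_mod_cast hB
  have hC' : (0 : ℝ) < C.card := by exact_mod_cast hC
  have hA' : (0 : ℝ) < A.card := by exact_mod_cast hA
  have hS0 : (0 : ℝ) < S.card := lt_of_le_of_lt (by positivity) hcon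
  have h1 := h S (Finset.filter_subset _ _) B subset_rfl C subset_rfl hcon.le
    (by nlinarith) (by nlinarith)
  have h2 : tripDensity E A B C + δ ≤ tripDensity E S B C := by
    unfold tripDensity
    rw [le_div_iff₀ (by positivity), tripCount_sum E S]
    push_cast
    have : ∑ v ∈ S, (tripDensity E A B C + δ) * (B.card * C.card : ℝ) ≤
        ∑ v ∈ S, (tripCount E {v} B C : ℝ) :=
      Finset.sum_le_sum fun v hv => (Finset.mem_filter.1 hv).2
    rw [Finset.sum_const, nsmul_eq_mul] at this
    unfold tripDensity at this
    linarith
  rw [abs_lt] at h1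
  linarith [h1.2]

lemma markov {T : Type*} (S : Finset T) (f : T → ℕ) (a : ℝ) :
    ((S.filter (fun t => a < (f t : ℝ))).card : ℝ) * a ≤ ((∑ t ∈ S, f t : ℕ) : ℝ) := by
  push_cast
  calc ((S.filter (fun t => a < (f t : ℝ))).card : ℝ) * a
      = ∑ t ∈ S.filter (fun t => a < (f t : ℝ)), a := by simp
    _ ≤ ∑ t ∈ S.filter (fun t => a < (f t : ℝ)), (f t : ℝ) :=
        Finset.sum_le_sum fun t ht => (Finset.mem_filter.1 ht).2.le
    _ ≤ _ := Finset.sum_le_sum_of_subset_of_nonneg (Finset.filter_subset _ _)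
        fun _ _ _ => by positivity

noncomputable def irrP {V : Type} {L : ℕ} (δ : ℝ) (E : Set (Finset V)) (P : Fin L → Finset V)
    (h : Fin L) : Finset (Fin L × Fin L) :=
  univ.filter (fun q => ¬ Reg3 δ E (P h) (P q.1) (P q.2))

noncomputable def atypP {V : Type} {L : ℕ} (δ : ℝ) (E : Set (Finset V)) (P : Fin L → Finset V)
    (h : Fin L) (v : V) : Finset (Fin L × Fin L) :=
  univ.filter (fun q => Reg3 δ E (P h) (P q.1) (P q.2) ∧
    (tripDensity E (P h) (P q.1) (P q.2) + δ) * ((P q.1).card * (P q.2).card) ≤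
      (tripCount E {v} (P q.1) (P q.2) : ℝ))

lemma clean {V : Type} {L m : ℕ} (η : ℝ) (hη : 0 < η) (hη1 : η ≤ 1 / 4)
    (E : Set (Finset V)) (P : Fin L → Finset V) (hm : 0 < m) (hL : 0 < L)
    (hP : ∀ l, (P l).card = m)
    (hbad : ((univ.filter (fun t : Fin L × Fin L × Fin L =>
        ¬ Reg3 (η ^ 2) E (P t.1) (P t.2.1) (P t.2.2))).card : ℝ) ≤ η ^ 2 * (L : ℝ) ^ 3) :
    ∃ (H : Finset (Fin L)) (W : Fin L → Finset V) (m' : ℕ),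
      (∀ h, W h ⊆ P h) ∧ (∀ h, (W h).card = m') ∧ (1 - η) * m ≤ m' ∧
      (1 - η) * L ≤ H.card ∧
      (∀ h ∈ H, ((irrP (η ^ 2) E P h).card : ℝ) ≤ η * (L : ℝ) ^ 2) ∧
      (∀ h, ∀ v ∈ W h, ((atypP (η ^ 2) E P h v).card : ℝ) ≤ η * (L : ℝ) ^ 2) := by
  have hL' : (0 : ℝ) < L := by exact_mod_cast hL
  have hm' : (0 : ℝ) < m := by exact_mod_cast hm
  have hη2 : η ^ 2 ≤ 1 := by nlinarith
  have hbadv : ∀ h, (((P h).filter (fun v => η * (L : ℝ) ^ 2 <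
      ((atypP (η ^ 2) E P h v).card : ℝ))).card : ℝ) ≤ η * m := by
    intro h
    have h1 := markov (P h) (fun v => (atypP (η ^ 2) E P h v).card) (η * (L : ℝ) ^ 2)
    have h2 : ((∑ v ∈ P h, (atypP (η ^ 2) E P h v).card : ℕ) : ℝ) ≤
        (L : ℝ) ^ 2 * (η ^ 2 * m) := by
      unfold atypP
      simp only [Finset.card_filter]
      rw [Finset.sum_comm]
      push_cast
      calc _ ≤ ∑ q : Fin L × Fin L, η ^ 2 * (m : ℝ) := by
            refine Finset.sum_le_sum fun q _ => ?_
            by_cases hq : Reg3 (η ^ 2) E (P h) (P q.1) (P q.2)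
            · have := atyp_small hq (by positivity) hη2 (by rw [hP]; exact hm)
                (by rw [hP]; exact hm) (by rw [hP]; exact hm)
              rw [Finset.card_filter] at this
              push_cast at this
              simp only [hq, true_and]
              refine le_trans this ?_
              rw [hP]
            · simp only [hq, false_and, if_false, Finset.sum_const_zero]
              positivity
        _ = _ := by
            rw [Finset.sum_const, Finset.card_univ, nsmul_eq_mul]
            simp only [Fintype.card_prod, Fintype.card_fin]
            push_cast
            ring
    have h3 : 0 < η * (L : ℝ) ^ 2 := by positivity
    have h4 := h1.trans h2
    have h5 : (L : ℝ) ^ 2 * (η ^ 2 * m) = (η * m) * (η * (L : ℝ) ^ 2) := by ring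
    rw [h5] at h4
    exact le_of_mul_le_mul_right h4 h3
  have hfl : ⌊η * m⌋₊ ≤ m := by
    apply Nat.floor_le_of_le
    nlinarith
  have hW : ∀ h, ∃ W ⊆ (P h).filter (fun v => ¬ (η * (L : ℝ) ^ 2 <
      ((atypP (η ^ 2) E P h v).card : ℝ))), W.card = m - ⌊η * m⌋₊ := by
    intro h
    apply Finset.exists_subset_card_eq
    have h1 := Finset.card_filter_add_card_filter_not (s := P h) (fun v => η * (L : ℝ) ^ 2 <
      ((atypP (η ^ 2) E P h v).card : ℝ))
    have h2 := Nat.le_floor (hbadv h)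
    rw [hP] at h1
    omega
  choose W hWs hWc using hW
  refine ⟨univ.filter (fun h => ¬ (η * (L : ℝ) ^ 2 < ((irrP (η ^ 2) E P h).card : ℝ))), W,
    m - ⌊η * m⌋₊, fun h => (hWs h).trans (Finset.filter_subset _ _), hWc, ?_, ?_, ?_, ?_⟩
  · rw [Nat.cast_sub hfl]
    have := Nat.floor_le (show 0 ≤ η * m by positivity)
    linarith
  · have h1 := markov univ (fun h => (irrP (η ^ 2) E P h).card) (η * (L : ℝ) ^ 2)
    have h2 : (univ.filter (fun t : Fin L × Fin L × Fin L =>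
        ¬ Reg3 (η ^ 2) E (P t.1) (P t.2.1) (P t.2.2))).card =
        ∑ h, (irrP (η ^ 2) E P h).card := by
      unfold irrP
      simp only [Finset.card_filter, Fintype.sum_prod_type]
    rw [h2] at hbad
    have h3 : 0 < η * (L : ℝ) ^ 2 := by positivity
    have h4 := h1.trans hbad
    have h5 : η ^ 2 * (L : ℝ) ^ 3 = (η * L) * (η * (L : ℝ) ^ 2) := by ring
    rw [h5] at h4
    have h6 := le_of_mul_le_mul_right h4 h3
    have h7 := Finset.card_filter_add_card_filter_not (s := (univ : Finset (Fin L)))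
      (fun h => η * (L : ℝ) ^ 2 < ((irrP (η ^ 2) E P h).card : ℝ))
    rw [Finset.card_univ, Fintype.card_fin] at h7
    have h8 : (((univ.filter (fun h => η * (L : ℝ) ^ 2 <
      ((irrP (η ^ 2) E P h).card : ℝ))).card : ℝ)) + ((univ.filter (fun h => ¬ (η * (L : ℝ) ^ 2 <
        ((irrP (η ^ 2) E P h).card : ℝ)))).card : ℝ) = L := by exact_mod_cast h7
    linarith
  · intro h hh
    exact not_lt.1 (Finset.mem_filter.1 hh).2
  · intro h v hv
    exact not_lt.1 (Finset.mem_filter.1 (hWs h hv)).2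

lemma deg_loss {V : Type} [Fintype V] (E E' : Set (Finset V)) (hE : ∀ e ∈ E, e.card = 3)
    (v : V) : hDeg E v ≤ hDeg E' v +
      (univ.filter (fun p : V × V => ({v, p.1, p.2} : Finset V) ∈ E ∧
        ({v, p.1, p.2} : Finset V) ∉ E')).card := by
  have h1 : (univ.filter (fun e : Finset V => e ∈ E ∧ v ∈ e)) ⊆
      (univ.filter (fun e : Finset V => e ∈ E' ∧ v ∈ e)) ∪
      (univ.filter (fun p : V × V => ({v, p.1, p.2} : Finset V) ∈ E ∧
        ({v, p.1, p.2} : Finset V) ∉ E')).image (fun p => ({v, p.1, p.2} : Finset V)) := by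
    intro e he
    simp only [Finset.mem_filter, Finset.mem_univ, true_and] at he
    by_cases h : e ∈ E'
    · exact Finset.mem_union_left _ (by simp [h, he.2])
    · refine Finset.mem_union_right _ ?_
      have h3 := hE e he.1
      have h4 : (e.erase v).card = 2 := by rw [Finset.card_erase_of_mem he.2, h3]
      obtain ⟨y, z, -, hyz⟩ := Finset.card_eq_two.1 h4
      have h5 : ({v, y, z} : Finset V) = e := by
        rw [← Finset.insert_erase he.2, hyz]
      refine Finset.mem_image.2 ⟨(y, z), ?_, h5⟩
      simp only [Finset.mem_filter, Finset.mem_univ, true_and, h5]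
      exact ⟨he.1, h⟩
  unfold hDeg
  refine (Finset.card_le_card h1).trans ((Finset.card_union_le _ _).trans ?_)
  exact Nat.add_le_add_left Finset.card_image_le _

lemma loss_bound {V : Type} [Fintype V] {L m : ℕ} (η d : ℝ) (hη : 0 < η)
    (hd : 0 ≤ d) (E : Set (Finset V)) (P : Fin L → Finset V)
    (hP : ∀ l, (P l).card = m) (hLη : 1 ≤ η * L) (hLm : (L : ℝ) * m ≤ Fintype.card V)
    (h : Fin L) (v : V)
    (hirr : ((irrP (η ^ 2) E P h).card : ℝ) ≤ η * (L : ℝ) ^ 2)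
    (hatyp : ((atypP (η ^ 2) E P h v).card : ℝ) ≤ η * (L : ℝ) ^ 2)
    (X : Finset (V × V))
    (hX : ∀ p ∈ X, ({v, p.1, p.2} : Finset V) ∈ E ∧ ∃ i j, p.1 ∈ P i ∧ p.2 ∈ P j ∧
      (h ≠ i → h ≠ j → i ≠ j → Reg3 (η ^ 2) E (P h) (P i) (P j) →
        tripDensity E (P h) (P i) (P j) ≤ d + η ^ 2)) :
    (X.card : ℝ) ≤ (d + 5 * η + 2 * η ^ 2) * (Fintype.card V : ℝ) ^ 2 := by
  set n := Fintype.card V with hn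
  let T6 : Finset (Fin L × Fin L) := univ.filter (fun q =>
    (tripCount E {v} (P q.1) (P q.2) : ℝ) ≤ (d + 2 * η ^ 2) * (m : ℝ) ^ 2)
  have hsub : X ⊆ (P h ×ˢ univ) ∪ ((univ ×ˢ P h) ∪ ((univ.biUnion fun i => P i ×ˢ P i) ∪
      (((irrP (η ^ 2) E P h).biUnion fun q => P q.1 ×ˢ P q.2) ∪
      (((atypP (η ^ 2) E P h v).biUnion fun q => P q.1 ×ˢ P q.2) ∪
      (T6.biUnion fun q => (P q.1 ×ˢ P q.2).filter
        (fun p => ({v, p.1, p.2} : Finset V) ∈ E)))))) := by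
    intro p hp
    obtain ⟨hpE, i, j, hi, hj, hr⟩ := hX p hp
    simp only [Finset.mem_union, Finset.mem_product, Finset.mem_univ, and_true, true_and,
      Finset.mem_biUnion, Finset.mem_filter]
    by_cases h1 : h = i
    · left; rw [h1]; exact hi
    by_cases h2 : h = j
    · right; left; rw [h2]; exact hj
    by_cases h3 : i = j
    · right; right; left; exact ⟨i, hi, by rw [h3]; exact hj⟩
    by_cases h4 : Reg3 (η ^ 2) E (P h) (P i) (P j)
    · by_cases h5 : (i, j) ∈ atypP (η ^ 2) E P h v
      · right; right; right; right; left
        exact ⟨(i, j), h5, hi, hj⟩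
      · right; right; right; right; right
        refine ⟨(i, j), ?_, ⟨hi, hj⟩, hpE⟩
        simp only [T6, Finset.mem_filter, Finset.mem_univ, true_and]
        unfold atypP at h5
        simp only [Finset.mem_filter, Finset.mem_univ, true_and, h4, not_le, hP] at h5
        have h6 := hr h1 h2 h3 h4
        have h7 : (0 : ℝ) ≤ (m : ℝ) * m := by positivity
        nlinarith
    · right; right; right; left
      refine ⟨(i, j), ?_, hi, hj⟩
      simp only [irrP, Finset.mem_filter, Finset.mem_univ, true_and]
      exact h4
  have hc := (Finset.card_le_card hsub).trans ((Finset.card_union_le _ _).trans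
    (Nat.add_le_add_left ((Finset.card_union_le _ _).trans
    (Nat.add_le_add_left ((Finset.card_union_le _ _).trans
    (Nat.add_le_add_left ((Finset.card_union_le _ _).trans
    (Nat.add_le_add_left (Finset.card_union_le _ _) _)) _)) _)) _))
  have c1 : ((P h ×ˢ (univ : Finset V)).card : ℝ) = m * n := by
    rw [Finset.card_product, hP, Finset.card_univ]; push_cast; rfl
  have c2 : (((univ : Finset V) ×ˢ P h).card : ℝ) = m * n := by
    rw [Finset.card_product, hP, Finset.card_univ]; push_cast; ring
  have c3 : (((univ : Finset (Fin L)).biUnion fun i => P i ×ˢ P i).card : ℝ) ≤ L * (m * m) := by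
    have := Finset.card_biUnion_le_card_mul (univ : Finset (Fin L)) (fun i => P i ×ˢ P i)
      (m * m) (fun i _ => by rw [Finset.card_product, hP])
    rw [Finset.card_univ, Fintype.card_fin] at this
    exact_mod_cast this
  have c45 : ∀ B : Finset (Fin L × Fin L), (B.card : ℝ) ≤ η * (L : ℝ) ^ 2 →
      ((B.biUnion fun q => P q.1 ×ˢ P q.2).card : ℝ) ≤ η * (L : ℝ) ^ 2 * (m * m) := by
    intro B hB
    have := Finset.card_biUnion_le_card_mul B (fun q => P q.1 ×ˢ P q.2)
      (m * m) (fun i _ => by rw [Finset.card_product, hP, hP])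
    have h2 : ((B.biUnion fun q => P q.1 ×ˢ P q.2).card : ℝ) ≤ B.card * (m * m) := by
      exact_mod_cast this
    exact h2.trans (mul_le_mul_of_nonneg_right hB (by positivity))
  have c4 := c45 _ hirr
  have c5 := c45 _ hatyp
  have c6 : ((T6.biUnion fun q => (P q.1 ×ˢ P q.2).filter
        (fun p => ({v, p.1, p.2} : Finset V) ∈ E)).card : ℝ) ≤
      (L : ℝ) ^ 2 * ((d + 2 * η ^ 2) * (m : ℝ) ^ 2) := by
    have h1 : ((T6.biUnion fun q => (P q.1 ×ˢ P q.2).filter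
        (fun p => ({v, p.1, p.2} : Finset V) ∈ E)).card : ℝ) ≤ ∑ q ∈ T6,
        (((P q.1 ×ˢ P q.2).filter (fun p => ({v, p.1, p.2} : Finset V) ∈ E)).card : ℝ) := by
      exact_mod_cast Finset.card_biUnion_le
    have h2 : ∀ q ∈ T6, (((P q.1 ×ˢ P q.2).filter
        (fun p => ({v, p.1, p.2} : Finset V) ∈ E)).card : ℝ) ≤ (d + 2 * η ^ 2) * (m : ℝ) ^ 2 := by
      intro q hq
      have h3 := (Finset.mem_filter.1 hq).2
      have h4 : tripCount E {v} (P q.1) (P q.2) = ((P q.1 ×ˢ P q.2).filter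
        (fun p => ({v, p.1, p.2} : Finset V) ∈ E)).card := by
        unfold tripCount
        simp only [Finset.card_filter, Finset.sum_product, Finset.sum_singleton]
      rw [← h4]; exact h3
    refine h1.trans ((Finset.sum_le_sum h2).trans ?_)
    rw [Finset.sum_const, nsmul_eq_mul]
    refine mul_le_mul_of_nonneg_right ?_ (by positivity)
    have h5 : T6.card ≤ L * L := by
      have := Finset.card_le_univ T6
      simpa using this
    have h6 : (T6.card : ℝ) ≤ L * L := by exact_mod_cast h5
    linarith [sq (L : ℝ)]
  have hc' : (X.card : ℝ) ≤ ((P h ×ˢ (univ : Finset V)).card : ℝ) +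
      ((((univ : Finset V) ×ˢ P h).card : ℝ) +
      ((((univ : Finset (Fin L)).biUnion fun i => P i ×ˢ P i).card : ℝ) +
      ((((irrP (η ^ 2) E P h).biUnion fun q => P q.1 ×ˢ P q.2).card : ℝ) +
      ((((atypP (η ^ 2) E P h v).biUnion fun q => P q.1 ×ˢ P q.2).card : ℝ) +
      ((T6.biUnion fun q => (P q.1 ×ˢ P q.2).filter
        (fun p => ({v, p.1, p.2} : Finset V) ∈ E)).card : ℝ))))) := by
    exact_mod_cast hc
  have hm0 : (0 : ℝ) ≤ m := by positivity
  have hn0 : (0 : ℝ) ≤ n := by positivity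
  have hL0 : (0 : ℝ) ≤ L := by positivity
  have hmn : (m : ℝ) ≤ η * n := by
    calc (m : ℝ) = 1 * m := by ring
      _ ≤ (η * L) * m := by gcongr
      _ = η * (L * m) := by ring
      _ ≤ η * n := by gcongr
  have f1 : (m : ℝ) * n ≤ η * (n : ℝ) ^ 2 := by
    calc (m : ℝ) * n ≤ (η * n) * n := by gcongr
      _ = _ := by ring
  have f3 : (L : ℝ) * (m * m) ≤ η * (n : ℝ) ^ 2 := by
    calc (L : ℝ) * (m * m) = (L * m) * m := by ring
      _ ≤ n * m := by gcongr
      _ ≤ _ := by linarith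
  have fsq : ((L : ℝ) * m) ^ 2 ≤ (n : ℝ) ^ 2 := by gcongr
  have f4 : η * (L : ℝ) ^ 2 * (m * m) ≤ η * (n : ℝ) ^ 2 := by
    calc η * (L : ℝ) ^ 2 * (m * m) = η * (L * m) ^ 2 := by ring
      _ ≤ _ := by gcongr
  have f6 : (L : ℝ) ^ 2 * ((d + 2 * η ^ 2) * (m : ℝ) ^ 2) ≤ (d + 2 * η ^ 2) * (n : ℝ) ^ 2 := by
    calc (L : ℝ) ^ 2 * ((d + 2 * η ^ 2) * (m : ℝ) ^ 2) = (d + 2 * η ^ 2) * (L * m) ^ 2 := by ring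
      _ ≤ _ := by gcongr
  linarith

lemma three_disj {V : Type} (e A B C : Finset V) (h1 : Disjoint A B) (h2 : Disjoint A C)
    (h3 : Disjoint B C) : (e ∩ A).card + (e ∩ B).card + (e ∩ C).card ≤ e.card := by
  rw [← Finset.card_union_of_disjoint, ← Finset.card_union_of_disjoint]
  · apply Finset.card_le_card
    intro x hx
    simp only [Finset.mem_union, Finset.mem_inter] at hx
    tauto
  · rw [Finset.disjoint_left] at *
    intro x hx
    simp only [Finset.mem_union, Finset.mem_inter] at *
    tauto
  · rw [Finset.disjoint_left] at *
    intro x hx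
    simp only [Finset.mem_inter] at *
    tauto

/-! ## Statement 19 -/

set_option maxHeartbeats 2000000 in
theorem stmt19 (L₀ : ℕ) (hL₀ : 1 ≤ L₀) (ε : ℝ) (hε : 0 < ε) :
    ∃ n₀ : ℕ, ∀ d : ℝ, 0 ≤ d → d < 1 →
    ∀ (V : Type) [Fintype V], n₀ ≤ Fintype.card V →
    ∀ E : Set (Finset V), (∀ e ∈ E, e.card = 3) →
    ∃ (L : ℕ) (Vp : ℕ → Finset V) (E' : Set (Finset V)),
      E' ⊆ E ∧
      (∀ i j, i ≠ j → Disjoint (Vp i) (Vp j)) ∧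
      ((Finset.range (L + 1)).biUnion Vp = (univ : Finset V)) ∧
      L₀ ≤ L ∧ L ≤ n₀ ∧
      ((Vp 0).card : ℝ) ≤ ε * (Fintype.card V : ℝ) ∧
      (∃ m : ℕ, ∀ i, 1 ≤ i → i ≤ L → (Vp i).card = m) ∧
      (∀ v : V, (hDeg E v : ℝ) - (d + ε) * (Fintype.card V : ℝ) ^ 2 < (hDeg E' v : ℝ)) ∧
      (∀ e ∈ E', ∀ i, 1 ≤ i → i ≤ L → 2 ≤ (e ∩ Vp i).card → (e ∩ Vp 0).Nonempty) ∧
      (∀ h i j, 1 ≤ h → h ≤ L → 1 ≤ i → i ≤ L → 1 ≤ j → j ≤ L →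
        h ≠ i → h ≠ j → i ≠ j →
        tripCount E' (Vp h) (Vp i) (Vp j) = 0 ∨ TripReg ε d E' (Vp h) (Vp i) (Vp j)) := by
  obtain ⟨η, hη, hη16, hηε⟩ : ∃ η : ℝ, 0 < η ∧ η ≤ 1 / 16 ∧ η ≤ ε / 16 :=
    ⟨min ε 1 / 16, by positivity, by linarith [min_le_right ε 1], by linarith [min_le_left ε 1]⟩
  have hη2 : η ^ 2 ≤ η / 16 := by nlinarith
  have hη20 : 0 < η ^ 2 := by positivity
  obtain ⟨N, hN⟩ := weak_regularity (η ^ 2) hη20 (by linarith) (2 * L₀ + ⌈1 / η⌉₊)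
  refine ⟨N, fun d hd _ V _ hV E hE => ?_⟩
  obtain ⟨L, m, P, hm, hP, hPd, hL0, hLN, hcov, hbad⟩ := hN V hV E
  have hL : 0 < L := by omega
  obtain ⟨H, W, m', hWP, hWc, hmm', hH, hirr, hatyp⟩ :=
    clean η hη (by linarith) E P hm hL hP hbad
  set n := Fintype.card V with hn
  have hLr : (0 : ℝ) < L := by exact_mod_cast hL
  have hmr : (0 : ℝ) < m := by exact_mod_cast hm
  have hLm : (L : ℝ) * m ≤ n := by
    have h1 : ((univ : Finset (Fin L)).biUnion P).card = L * m := by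
      rw [Finset.card_biUnion (fun l _ l' _ h => hPd l l' h)]
      simp [hP]
    have h2 := Finset.card_le_univ ((univ : Finset (Fin L)).biUnion P)
    rw [h1] at h2
    exact_mod_cast h2
  have hnr : (0 : ℝ) < n := lt_of_lt_of_le (by positivity) hLm
  have hLη : 1 ≤ η * L := by
    have h1 : 1 / η ≤ (L : ℝ) :=
      (Nat.le_ceil _).trans (Nat.cast_le.2 (by omega))
    rw [div_le_iff₀ hη] at h1
    linarith
  have hWd : ∀ h i, h ≠ i → Disjoint (W h) (W i) := fun h i hne =>
    Finset.disjoint_of_subset_left (hWP h) (Finset.disjoint_of_subset_right (hWP i) (hPd h i hne))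
  have hm2 : (m : ℝ) ≤ 2 * m' := by nlinarith
  have hHL : H.card ≤ L := by
    have := Finset.card_le_univ H
    simpa using this
  have hL0H : L₀ ≤ H.card := by
    have h1 : (2 * L₀ : ℝ) ≤ L := by exact_mod_cast (by omega : 2 * L₀ ≤ L)
    have h2 : (L₀ : ℝ) ≤ H.card := by nlinarith
    exact_mod_cast h2
  -- indexing of the clusters
  obtain ⟨g, hgH, hginj, hgsurj⟩ : ∃ g : ℕ → Fin L, (∀ k, 1 ≤ k → k ≤ H.card → g k ∈ H) ∧
      (∀ k l, 1 ≤ k → k ≤ H.card → 1 ≤ l → l ≤ H.card → g k = g l → k = l) ∧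
      (∀ h ∈ H, ∃ k, 1 ≤ k ∧ k ≤ H.card ∧ g k = h) := by
    refine ⟨fun k => if hk : k - 1 < H.card then (H.equivFin.symm ⟨k - 1, hk⟩).1 else ⟨0, hL⟩,
      ?_, ?_, ?_⟩
    · intro k h1 h2
      have hk : k - 1 < H.card := by omega
      simp only [hk, dif_pos]
      exact (H.equivFin.symm ⟨k - 1, hk⟩).2
    · intro k l h1 h2 h3 h4 heq
      have hk : k - 1 < H.card := by omega
      have hl : l - 1 < H.card := by omega
      simp only [hk, hl, dif_pos] at heq
      have := H.equivFin.symm.injective (Subtype.ext heq)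
      simp only [Fin.mk.injEq] at this
      omega
    · intro h hh
      refine ⟨(H.equivFin ⟨h, hh⟩).1 + 1, by omega, (H.equivFin ⟨h, hh⟩).2, ?_⟩
      simp
  set V0 : Finset V := univ \ H.biUnion W with hV0
  have hmemV0 : ∀ x, x ∉ V0 → ∃ h ∈ H, x ∈ W h := by
    intro x hx
    simpa [hV0] using hx
  have hV0W : ∀ h ∈ H, Disjoint V0 (W h) := by
    intro h hh
    exact Finset.disjoint_of_subset_right (Finset.subset_biUnion_of_mem W hh)
      Finset.sdiff_disjoint
  let Vp : ℕ → Finset V := fun k => if k = 0 then V0 else if k ≤ H.card then W (g k) else ∅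
  have hVp0 : Vp 0 = V0 := by simp [Vp]
  have hVpk : ∀ k, 1 ≤ k → k ≤ H.card → Vp k = W (g k) := by
    intro k h1 h2
    have : k ≠ 0 := by omega
    simp [Vp, this, h2]
  have hVpe : ∀ k, H.card < k → Vp k = ∅ := by
    intro k h1
    have : k ≠ 0 := by omega
    simp [Vp, this, not_le.2 h1]
  obtain ⟨E', hE'⟩ : ∃ E' : Set (Finset V), ∀ e, e ∈ E' ↔ (e ∈ E ∧ ((e ∩ V0).Nonempty ∨ ∃ h ∈ H, ∃ i ∈ H, ∃ j ∈ H,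
    h ≠ i ∧ h ≠ j ∧ i ≠ j ∧ TripReg ε d E (W h) (W i) (W j) ∧ (e ∩ W h).Nonempty ∧
    (e ∩ W i).Nonempty ∧ (e ∩ W j).Nonempty)) :=
    ⟨{e | _}, fun e => Iff.rfl⟩
  refine ⟨H.card, Vp, E', fun e he => ((hE' e).1 he).1, ?_, ?_, hL0H, hHL.trans hLN, ?_, ⟨m', ?_⟩, ?_, ?_, ?_⟩
  · -- disjointness
    have key : ∀ i j, i < j → Disjoint (Vp i) (Vp j) := by
      intro i j hij
      by_cases hj : H.card < j
      · rw [hVpe j hj]; exact Finset.disjoint_empty_right _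
      · rw [hVpk j (by omega) (by omega)]
        by_cases hi : i = 0
        · rw [hi, hVp0]; exact hV0W _ (hgH j (by omega) (by omega))
        · rw [hVpk i (by omega) (by omega)]
          refine hWd _ _ fun h => ?_
          have := hginj i j (by omega) (by omega) (by omega) (by omega) h
          omega
    intro i j hij
    rcases lt_or_gt_of_ne hij with h | h
    · exact key i j h
    · exact (key j i h).symm
  · -- covering
    refine Finset.eq_univ_iff_forall.2 fun x => ?_
    rw [Finset.mem_biUnion]
    by_cases hx : x ∈ V0
    · exact ⟨0, by simp, by rw [hVp0]; exact hx⟩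
    · obtain ⟨h, hh, hxh⟩ := hmemV0 x hx
      obtain ⟨k, k1, k2, rfl⟩ := hgsurj h hh
      exact ⟨k, by simp; omega, by rw [hVpk k k1 k2]; exact hxh⟩
  · -- size of the exceptional set
    rw [hVp0]
    have h1 : V0.card + H.card * m' = n := by
      have h2 : (H.biUnion W).card = H.card * m' := by
        rw [Finset.card_biUnion (fun l _ l' _ h => hWd l l' h)]
        simp [hWc]
      rw [← h2, hV0, Finset.card_sdiff_add_card_eq_card (Finset.subset_univ _), Finset.card_univ]
    have h3 : (V0.card : ℝ) + H.card * m' = n := by exact_mod_cast h1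
    have h4 : ((1 - η) * L) * ((1 - η) * m) ≤ H.card * m' := by
      have : 0 ≤ (1 - η) * m := mul_nonneg (by linarith) hmr.le
      exact mul_le_mul hH hmm' this (by positivity)
    have h5 : (1 - η ^ 2) * n ≤ L * m := by linarith
    have h6 : (1 - η) ^ 2 * ((1 - η ^ 2) * n) ≤ (1 - η) ^ 2 * (L * m) := by gcongr
    have h7 : 1 - ε ≤ (1 - η) ^ 2 * (1 - η ^ 2) := by nlinarith
    have h8 : (1 - ε) * n ≤ (1 - η) ^ 2 * (1 - η ^ 2) * n := by gcongr
    nlinarith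
  · intro i h1 h2
    rw [hVpk i h1 h2, hWc]
  · -- degrees
    intro v
    by_cases hv : v ∈ V0
    · have h1 : hDeg E v ≤ hDeg E' v := by
        unfold hDeg
        apply Finset.card_le_card
        intro e he
        simp only [Finset.mem_filter, Finset.mem_univ, true_and] at he ⊢
        exact ⟨(hE' e).2 ⟨he.1, Or.inl ⟨v, Finset.mem_inter.2 ⟨he.2, hv⟩⟩⟩, he.2⟩
      have h2 : (hDeg E v : ℝ) ≤ hDeg E' v := by exact_mod_cast h1
      have h3 : 0 < (d + ε) * (n : ℝ) ^ 2 := by positivity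
      linarith
    · obtain ⟨h, hh, hvh⟩ := hmemV0 v hv
      have h1 := deg_loss E E' hE v
      have h2 := loss_bound η d hη hd E P hP hLη hLm h v (hirr h hh) (hatyp h v hvh)
        (univ.filter (fun p : V × V => ({v, p.1, p.2} : Finset V) ∈ E ∧
        ({v, p.1, p.2} : Finset V) ∉ E')) (by
          intro p hp
          simp only [Finset.mem_filter, Finset.mem_univ, true_and] at hp
          obtain ⟨hpE, hpE'⟩ := hp
          have hno : ∀ x ∈ ({v, p.1, p.2} : Finset V), x ∉ V0 := fun x hx hx0 =>
            hpE' ((hE' _).2 ⟨hpE, Or.inl ⟨x, Finset.mem_inter.2 ⟨hx, hx0⟩⟩⟩)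
          obtain ⟨i, hi, hpi⟩ := hmemV0 p.1 (hno _ (by simp))
          obtain ⟨j, hj, hpj⟩ := hmemV0 p.2 (hno _ (by simp))
          refine ⟨hpE, i, j, hWP i hpi, hWP j hpj, fun a1 a2 a3 hreg => ?_⟩
          have cW : ∀ l, ((P l).card : ℝ) ≤ 2 * (W l).card := by
            intro l; rw [hP, hWc]; exact hm2
          obtain ⟨b1, b2⟩ := reg_inherit (ε := ε) hreg (by linarith) (by linarith) hε
            (hWP h) (hWP i) (hWP j) (cW h) (cW i) (cW j)
          by_contra hcon
          push Not at hcon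
          rw [abs_lt] at b1
          refine hpE' ((hE' _).2 ⟨hpE, Or.inr ⟨h, hh, i, hi, j, hj, a1, a2, a3, ⟨by linarith [b1.1], b2⟩,
            ⟨v, ?_⟩, ⟨p.1, ?_⟩, ⟨p.2, ?_⟩⟩⟩)
          · exact Finset.mem_inter.2 ⟨by simp, hvh⟩
          · exact Finset.mem_inter.2 ⟨by simp, hpi⟩
          · exact Finset.mem_inter.2 ⟨by simp, hpj⟩)
      have h3 : (hDeg E v : ℝ) ≤ hDeg E' v + ((univ.filter (fun p : V × V =>
        ({v, p.1, p.2} : Finset V) ∈ E ∧ ({v, p.1, p.2} : Finset V) ∉ E')).card : ℝ) := by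
        exact_mod_cast h1
      have h4 : (d + 5 * η + 2 * η ^ 2) * (n : ℝ) ^ 2 < (d + ε) * (n : ℝ) ^ 2 := by
        apply mul_lt_mul_of_pos_right _ (by positivity)
        linarith
      linarith
  · -- edges with two vertices in a cluster
    intro e he k k1 k2 hk
    rw [hVp0]
    rw [hVpk k k1 k2] at hk
    replace he := (hE' e).1 he
    rcases he.2 with h0 | ⟨h, -, i, -, j, -, a1, a2, a3, -, b1, b2, b3⟩
    · exact h0
    · exfalso
      have h3 := hE e he.1
      have b1' := Finset.card_pos.2 b1
      have b2' := Finset.card_pos.2 b2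
      have b3' := Finset.card_pos.2 b3
      by_cases e1 : g k = h
      · have := three_disj e _ _ _ (hWd h i a1) (hWd h j a2) (hWd i j a3)
        rw [e1] at hk
        omega
      by_cases e2 : g k = i
      · have := three_disj e _ _ _ (hWd h i a1) (hWd h j a2) (hWd i j a3)
        rw [e2] at hk
        omega
      have := three_disj e _ _ _ (hWd _ _ e1) (hWd _ _ e2) (hWd h i a1)
      omega
  · -- regularity
    intro h' i' j' x1 x2 x3 x4 x5 x6 n1 n2 n3
    rw [hVpk _ x1 x2, hVpk _ x3 x4, hVpk _ x5 x6]
    have y1 := hgH _ x1 x2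
    have y2 := hgH _ x3 x4
    have y3 := hgH _ x5 x6
    have z1 : g h' ≠ g i' := fun hc => n1 (hginj _ _ x1 x2 x3 x4 hc)
    have z2 : g h' ≠ g j' := fun hc => n2 (hginj _ _ x1 x2 x5 x6 hc)
    have z3 : g i' ≠ g j' := fun hc => n3 (hginj _ _ x3 x4 x5 x6 hc)
    generalize g h' = h at *
    generalize g i' = i at *
    generalize g j' = j at *
    by_cases hT : TripReg ε d E (W h) (W i) (W j)
    · right
      have hcnt : ∀ U₁ ⊆ W h, ∀ U₂ ⊆ W i, ∀ U₃ ⊆ W j,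
          tripDensity E' U₁ U₂ U₃ = tripDensity E U₁ U₂ U₃ := by
        intro U₁ u1 U₂ u2 U₃ u3
        unfold tripDensity tripCount
        congr 3
        apply Finset.filter_congr
        intro p hp
        simp only [Finset.mem_product] at hp
        refine ⟨fun hq => ((hE' _).1 hq).1, fun hq => (hE' _).2 ⟨hq, Or.inr ⟨h, y1, i, y2, j, y3, z1, z2, z3, hT,
          ⟨p.1, ?_⟩, ⟨p.2.1, ?_⟩, ⟨p.2.2, ?_⟩⟩⟩⟩
        · exact Finset.mem_inter.2 ⟨by simp, u1 hp.1⟩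
        · exact Finset.mem_inter.2 ⟨by simp, u2 hp.2.1⟩
        · exact Finset.mem_inter.2 ⟨by simp, u3 hp.2.2⟩
      refine ⟨?_, fun U₁ u1 U₂ u2 U₃ u3 c1 c2 c3 => ?_⟩
      · rw [hcnt _ subset_rfl _ subset_rfl _ subset_rfl]; exact hT.1
      · rw [hcnt _ subset_rfl _ subset_rfl _ subset_rfl, hcnt _ u1 _ u2 _ u3]
        exact hT.2 U₁ u1 U₂ u2 U₃ u3 c1 c2 c3
    · left
      unfold tripCount
      rw [Finset.card_eq_zero, Finset.filter_eq_empty_iff]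
      intro p hp hpE
      simp only [Finset.mem_product] at hp
      obtain ⟨hp1, hp2, hp3⟩ := hp
      have huniq : ∀ x a b, x ∈ W a → x ∈ W b → a = b := by
        intro x a b ha hb
        by_contra hne
        exact Finset.disjoint_left.1 (hWd a b hne) ha hb
      rcases ((hE' _).1 hpE).2 with ⟨x, hx⟩ | ⟨a, ha, b, hb, c, hc, q1, q2, q3, hreg, r1, r2, r3⟩
      · rw [Finset.mem_inter] at hx
        obtain ⟨hx, hx0⟩ := hx
        simp only [Finset.mem_insert, Finset.mem_singleton] at hx
        rcases hx with rfl | rfl | rfl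
        · exact Finset.disjoint_left.1 (hV0W _ y1) hx0 hp1
        · exact Finset.disjoint_left.1 (hV0W _ y2) hx0 hp2
        · exact Finset.disjoint_left.1 (hV0W _ y3) hx0 hp3
      · have hmem : ∀ a, (({p.1, p.2.1, p.2.2} : Finset V) ∩ W a).Nonempty →
            a = h ∨ a = i ∨ a = j := by
          rintro a ⟨x, hx⟩
          rw [Finset.mem_inter] at hx
          obtain ⟨hx, hxa⟩ := hx
          simp only [Finset.mem_insert, Finset.mem_singleton] at hx
          rcases hx with hx | hx | hx <;> rw [hx] at hxa
          · exact Or.inl (huniq _ _ _ hxa hp1)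
          · exact Or.inr (Or.inl (huniq _ _ _ hxa hp2))
          · exact Or.inr (Or.inr (huniq _ _ _ hxa hp3))
        apply hT
        rcases hmem a r1 with ea | ea | ea <;> rcases hmem b r2 with eb | eb | eb <;>
          rcases hmem c r3 with ec | ec | ec <;> rw [ea, eb, ec] at hreg <;>
          first
          | exact absurd (ea.trans eb.symm) q1
          | exact absurd (ea.trans ec.symm) q2
          | exact absurd (eb.trans ec.symm) q3
          | exact hreg
          | exact hreg.swap12
          | exact hreg.swap23
          | exact hreg.swap12.swap23
          | exact hreg.swap23.swap12
          | exact hreg.swap12.swap23.swap12
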